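/- Let S be a regular system of difference fields on V over A. Then for every u ⊆ V, S(u) is linearly disjoint from ∏_{v∈P(V,u,|u|-1)} S(v)^{alg} over ∏_{v∈P(u)^-} S(v), where P(V,u,k) = {v ⊆ V : |v ∩ u| ≤ k}. (First linear disjointness lemma for regular systems.) -/

import Mathlib

/-- Subfields `E` and `F` of `K` containing `C` are linearly disjoint over `C`
if the multiplication map `E ⊗[C] F → K` is injective. -/
def LinearDisjointOver {K : Type*} [Field K] (C E F : Subfield K) : Prop :=
  (Submodule.span C (E : Set K)).LinearDisjoint (Submodule.span C (F : Set K))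

/-- The relative algebraic closure `E^{alg}` of a subfield `E` inside `K`. -/
def algCl {K : Type*} [Field K] (E : Subfield K) : Subfield K :=
  Subfield.closure {x : K | IsAlgebraic E x}

/-- The inversive closure `E^{inv}`: the smallest subfield of `K` containing `E`
closed under `σ` and `σ⁻¹`. -/
def invCl {K : Type*} [Field K] (σ : K ≃+* K) (E : Subfield K) : Subfield K :=
  sInf {F : Subfield K | E ≤ F ∧ (∀ x ∈ F, σ x ∈ F) ∧ ∀ x ∈ F, σ.symm x ∈ F}

/-- `E` and `F` are independent over `C`: `((E·C)^{inv})^{alg}` and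
`((F·C)^{inv})^{alg}` are linearly disjoint over `(C^{inv})^{alg}`. -/
def IndependentOver {K : Type*} [Field K] (σ : K ≃+* K) (C E F : Subfield K) : Prop :=
  LinearDisjointOver (algCl (invCl σ C)) (algCl (invCl σ (E ⊔ C))) (algCl (invCl σ (F ⊔ C)))

/-- `F ≤ E` and `E/F` is a finite Galois extension (of subfields of `K`). -/
def IsFiniteGaloisExt {K : Type*} [Field K] (F E : Subfield K) : Prop :=
  ∃ h : F ≤ E,
    letI : Algebra F E := (Subfield.inclusion h).toAlgebra
    FiniteDimensional F E ∧ IsGalois F E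

/-- `I_u = {v ∩ u : v ∈ I}`. -/
def interFamily {V : Type*} [DecidableEq V] (I : Set (Finset V)) (u : Finset V) :
    Set (Finset V) :=
  {w | ∃ v ∈ I, w = v ∩ u}

/-- A system of difference fields on `V` over `A` inside `(K, σ)`. -/
structure DiffFieldSystem {K : Type*} [Field K] (σ : K ≃+* K)
    (V : Type*) [Fintype V] [DecidableEq V] (A : Subfield K) where
  /-- the underlying map from subsets of `V` to subfields of `K` -/
  S : Finset V → Subfield K
  mono : ∀ {u v : Finset V}, u ⊆ v → S u ≤ S v
  empty_eq : S ∅ = A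
  sigma_stable : ∀ u : Finset V, ∀ x ∈ S u, σ x ∈ S u
  perfect : ∀ u : Finset V, PerfectField (S u)
  /-- each `S u` has finite transcendence degree over `A` -/
  fin_trdeg : ∀ u : Finset V, ∃ t : Finset K,
    ∀ x ∈ S u, IsAlgebraic ↥(A ⊔ Subfield.closure (t : Set K)) x
  /-- each `S u` is the perfect closure of a difference subfield generated over
  `A` by a finite set (i.e. the smallest perfect `σ`-stable subfield of `K`
  containing `A` and that finite set) -/
  fin_gen : ∀ u : Finset V, ∃ t : Finset K,
    (A ≤ S u ∧ (t : Set K) ⊆ S u) ∧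
    ∀ F : Subfield K, A ≤ F → (t : Set K) ⊆ F → (∀ x ∈ F, σ x ∈ F) →
      PerfectField F → S u ≤ F
  /-- the family `(S {i})_{i ∈ V}` is independent over `A` -/
  indep : ∀ I₁ I₂ : Finset V, Disjoint I₁ I₂ →
    IndependentOver σ A (A ⊔ ⨆ i ∈ I₁, S {i}) (A ⊔ ⨆ i ∈ I₂, S {i})
  /-- for `|u| ≥ 2`, `S u` is a finite Galois extension of
  `S(u)⁻ = ∏_{v ∈ P(u)⁻} S v` -/
  galois : ∀ u : Finset V, 2 ≤ u.card →
    IsFiniteGaloisExt (⨆ v ∈ u.powerset.erase u, S v) (S u)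

namespace DiffFieldSystem

variable {K : Type*} [Field K] {σ : K ≃+* K}
variable {V : Type*} [Fintype V] [DecidableEq V] {A : Subfield K}

/-- `S(u)⁻ = ∏_{v ∈ P(u)⁻} S(v)`. -/
def Sminus (𝒮 : DiffFieldSystem σ V A) (u : Finset V) : Subfield K :=
  ⨆ v ∈ u.powerset.erase u, 𝒮.S v

/-- `𝒮` is an `I`-system: `S u = S(u)⁻` for `u ∉ I`. -/
def IsOn (𝒮 : DiffFieldSystem σ V A) (I : Set (Finset V)) : Prop :=
  ∀ u : Finset V, u ∉ I → 𝒮.S u = 𝒮.Sminus u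

/-- `𝒮` is regular: for every nonempty `u`, `S u` is linearly disjoint from
`∏_{v ∈ P(u)⁻} S(v)^{alg}` over `∏_{v ∈ P(u)⁻} S(v)`. -/
def Regular (𝒮 : DiffFieldSystem σ V A) : Prop :=
  ∀ u : Finset V, u ≠ ∅ →
    LinearDisjointOver (𝒮.Sminus u) (𝒮.S u) (⨆ v ∈ u.powerset.erase u, algCl (𝒮.S v))

end DiffFieldSystem

/-- `I` is a simplicial complex on `V`: downward closed with union all of `V`. -/
def IsSimplicialComplexOn (V : Type*) [DecidableEq V] (I : Set (Finset V)) : Prop :=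
  (∀ u ∈ I, ∀ v : Finset V, v ⊆ u → v ∈ I) ∧ ∀ i : V, ∃ u ∈ I, i ∈ u

/-!
Let `M = S(∅)^alg` and let `L` be the algebraic closure of the field generated by `S(∅)` and the
points outside `u`; by independence, `L` is linearly disjoint from `B = S(u)^alg` over `M`. Since
`M` is algebraically closed, every finitely generated `M`-subalgebra of `L` has an `M`-point, and
these points assemble to an embedding of `L` into an ultrapower of `M`. By disjointness it extends
to a specialization of the compositum of `B` and `L` that is the identity on `B`. For `v ⊉ u` the
field `S(v)^alg` is contained in `(S(v ∩ u) L)^alg`, so it specializes into an ultrapower of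
`S(v ∩ u)^alg`. A linear relation between elements of `S(u)` with coefficients in the compositum of
the `S(v)^alg` thus specializes to a relation with coefficients in the compositum of the `S(w)^alg`,
`w ⊊ u`, where regularity applies.
-/

section Germ

open Filter Polynomial

variable {ι R A V : Type*}

/-- Germs as an algebra over constant scalars, with the scalar action `Germ l A` already carries. -/
instance germAlgebra [CommSemiring R] [Semiring A] [Algebra R A] (l : Filter ι) :
    Algebra R (Germ l A) where
  algebraMap := (Germ.coeRingHom l).comp (algebraMap R (ι → A))
  commutes' r x := x.inductionOn fun f =>
    congrArg (Germ.coeRingHom l) (Algebra.commutes r f)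
  smul_def' r x := x.inductionOn fun f =>
    congrArg (Germ.coeRingHom l) (Algebra.smul_def r f)

/-- Germs as an algebra over germs of scalars, with the scalar action `Germ l A` already carries. -/
instance germAlgebraGerm [CommSemiring R] [Semiring A] [Algebra R A] (l : Filter ι) :
    Algebra (Germ l R) (Germ l A) where
  algebraMap :=
    { toFun := Germ.map (algebraMap R A)
      map_one' := congrArg Germ.ofFun (funext fun _ => map_one _)
      map_mul' := fun x y => Germ.inductionOn₂ x y fun _ _ =>
        congrArg Germ.ofFun (funext fun _ => map_mul _ _ _)
      map_zero' := congrArg Germ.ofFun (funext fun _ => map_zero _)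
      map_add' := fun x y => Germ.inductionOn₂ x y fun _ _ =>
        congrArg Germ.ofFun (funext fun _ => map_add _ _ _) }
  commutes' x y := Germ.inductionOn₂ x y fun _ _ =>
    congrArg Germ.ofFun (funext fun _ => Algebra.commutes _ _)
  smul_def' x y := Germ.inductionOn₂ x y fun _ _ =>
    congrArg Germ.ofFun (funext fun _ => Algebra.smul_def _ _)

instance isScalarTower_germ [CommSemiring R] [Semiring A] [Algebra R A] (l : Filter ι) :
    IsScalarTower R (Germ l R) (Germ l A) :=
  .of_algebraMap_eq fun _ => rfl

/-- The diagonal embedding of `A` into its algebra of germs. -/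
def germConst (R : Type*) [CommSemiring R] [Semiring A] [Algebra R A] (l : Filter ι) :
    A →ₐ[R] Germ l A where
  toRingHom := (Germ.coeRingHom l).comp (Pi.constRingHom ι A)
  commutes' _ := rfl

theorem germConst_apply [CommSemiring R] [Semiring A] [Algebra R A] {l : Filter ι} (x : A) :
    germConst R l x = (x : Germ l A) :=
  rfl

theorem linearIndependent_germ_const [Ring R] [AddCommGroup V] [Module R V] {κ : Type*}
    {v : κ → V} (hv : LinearIndependent R v) (l : Filter ι) :
    LinearIndependent (Germ l R) fun k => ((v k : V) : Germ l V) := by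
  rw [linearIndependent_iff']
  intro s c hc k hk
  choose f hf using fun k => Quotient.exists_rep (c k)
  obtain rfl : (fun k => Germ.ofFun (f k)) = c := funext hf
  have hsum : Germ.coeAddHom l (∑ k ∈ s, fun t => f k t • v k) = 0 := by
    rw [map_sum]
    exact hc
  refine Germ.coe_eq.2 ((Germ.coe_eq.1 hsum).mono fun t ht => ?_)
  rw [Finset.sum_apply] at ht
  exact linearIndependent_iff'.1 hv s (f · t) ht k hk

instance isAlgClosed_germ {K : Type*} [Field K] [IsAlgClosed K] (U : Ultrafilter ι) :
    IsAlgClosed (Germ (U : Filter ι) K) := by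
  refine IsAlgClosed.of_exists_root _ fun p hp hirr => ?_
  have hsurj : Function.Surjective (Germ.coeRingHom (R := K) (U : Filter ι)) :=
    Quotient.mk_surjective
  obtain ⟨q, rfl, hdeg, hq⟩ :=
    lifts_and_natDegree_eq_and_monic (mem_lifts_of_surjective hsurj p) hp
  have hroot (t : ι) : ∃ x : K, (q.map (Pi.evalRingHom (fun _ => K) t)).IsRoot x := by
    refine IsAlgClosed.exists_root _ (natDegree_pos_iff_degree_pos.1 ?_).ne'
    rw [hq.natDegree_map, hdeg]
    exact hirr.natDegree_pos
  choose x hx using hroot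
  have hqx : q.eval x = 0 := funext fun t => by
    rw [Pi.zero_apply, ← (hx t).eq_zero]
    exact (eval_map_apply (Pi.evalRingHom (fun _ => K) t) x).symm
  exact ⟨Germ.coeRingHom _ x, by rw [eval_map_apply, hqx, map_zero]⟩

end Germ

section AlgHomToUltrapower

open Filter

theorem nonempty_algHom_of_finiteType (M A : Type*) [Field M] [IsAlgClosed M] [CommRing A]
    [Nontrivial A] [Algebra M A] [Algebra.FiniteType M A] : Nonempty (A →ₐ[M] M) := by
  obtain ⟨m, hm⟩ := Ideal.exists_maximal A
  let := Ideal.Quotient.field m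
  have : Module.Finite M (A ⧸ m) := finite_of_finite_type_of_isJacobsonRing M (A ⧸ m)
  have hbij := IsAlgClosed.algebraMap_bijective_of_isIntegral (k := M) (K := A ⧸ m)
  exact ⟨(AlgEquiv.ofBijective (Algebra.ofId M (A ⧸ m)) hbij).symm.toAlgHom.comp
    (Ideal.Quotient.mkₐ M m)⟩

theorem exists_algHom_ultrapower_of_adjoin {M L N : Type*} [CommSemiring M] [Semiring L]
    [Semiring N] [Algebra M L] [Algebra M N]
    (h : ∀ T : Finset L, Nonempty (Algebra.adjoin M (T : Set L) →ₐ[M] N)) :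
    ∃ U : Ultrafilter (Finset L), Nonempty (L →ₐ[M] Germ (U : Filter (Finset L)) N) := by
  classical
  let g (T : Finset L) := (h T).some
  let r (l : L) (T : Finset L) : N :=
    if hl : l ∈ Algebra.adjoin M (T : Set L) then g T ⟨l, hl⟩ else 0
  have hr {l : L} {T : Finset L} (hl : l ∈ Algebra.adjoin M (T : Set L)) :
      r l T = g T ⟨l, hl⟩ := dif_pos hl
  let U : Ultrafilter (Finset L) := Ultrafilter.of atTop
  have hmem (l : L) : ∀ᶠ T : Finset L in U, l ∈ Algebra.adjoin M (T : Set L) :=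
    Ultrafilter.of_le _ <| (eventually_ge_atTop {l}).mono fun T hT =>
      Algebra.subset_adjoin (Finset.singleton_subset_iff.1 hT)
  refine ⟨U, ⟨AlgHom.ofLinearMap
    { toFun := fun l => Germ.ofFun (r l), map_add' := fun x y => ?_, map_smul' := fun m x => ?_ }
    ?_ fun x y => ?_⟩⟩
  · refine Germ.coe_eq.2 ?_
    filter_upwards [hmem x, hmem y] with T hx hy
    change _ = r x T + r y T
    rw [hr hx, hr hy, hr (add_mem hx hy), ← map_add]
    rfl
  · refine Germ.coe_eq.2 ?_
    filter_upwards [hmem x] with T hx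
    change _ = m • r x T
    rw [hr hx, hr (Subalgebra.smul_mem _ hx m), ← map_smul]
    rfl
  · refine Germ.coe_eq.2 (.of_forall fun T => ?_)
    exact (hr (one_mem _)).trans (map_one (g T))
  · refine Germ.coe_eq.2 ?_
    filter_upwards [hmem x, hmem y] with T hx hy
    change _ = r x T * r y T
    rw [hr hx, hr hy, hr (mul_mem hx hy), ← map_mul]
    rfl

theorem exists_algHom_ultrapower (M L : Type*) [Field M] [IsAlgClosed M] [CommRing L]
    [Nontrivial L] [Algebra M L] :
    ∃ U : Ultrafilter (Finset L), Nonempty (L →ₐ[M] Germ (U : Filter (Finset L)) M) :=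
  exists_algHom_ultrapower_of_adjoin fun T =>
    have : Algebra.FiniteType M (Algebra.adjoin M (T : Set L)) :=
      (Subalgebra.fg_iff_finiteType _).1 ⟨T, rfl⟩
    nonempty_algHom_of_finiteType _ _

end AlgHomToUltrapower

section Amalgam

open Filter TensorProduct Algebra.TensorProduct

theorem productLeftAlgHom_injective_of_linearIndependent {M B L P : Type*} [CommSemiring M]
    [Semiring B] [CommSemiring L] [CommSemiring P] [Algebra M B] [Algebra M L] [Algebra M P]
    [Algebra L P] [IsScalarTower M L P] {κ : Type*} (b : Module.Basis κ M B) {f : B →ₐ[M] P}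
    (hf : LinearIndependent L (f ∘ b)) :
    Function.Injective (productLeftAlgHom (Algebra.ofId L P) f) := by
  have hconstr : (productLeftAlgHom (Algebra.ofId L P) f).toLinearMap =
      (basis L b).constr L (f ∘ b) := by
    refine (basis L b).ext fun k => ?_
    rw [Module.Basis.constr_basis, basis_apply, AlgHom.toLinearMap_apply,
      lift_tmul, map_one, one_mul, Function.comp_apply]
  have hinj := (basis L b).injective_constr_of_linearIndependent (R₂ := L) hf
  rwa [← hconstr] at hinj

theorem exists_field_amalgam.{u, v} {R : Type*} {P : Type u} {Q : Type v} [CommRing R] [Field P]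
    [Field Q] {f : R →+* P} {g : R →+* Q} (hf : Function.Injective f)
    (hg : Function.Injective g) :
    ∃ (Ω : Type max u v) (_ : Field Ω) (i : P →+* Ω) (j : Q →+* Ω), ∀ x, i (f x) = j (g x) := by
  let : Algebra R P := f.toAlgebra
  let : Algebra R Q := g.toAlgebra
  have : Nontrivial (P ⊗[R] Q) := nontrivial_of_algebraMap_injective_of_isDomain R P Q hf hg
  obtain ⟨m, hm⟩ := Ideal.exists_maximal (P ⊗[R] Q)
  exact ⟨_, Ideal.Quotient.field m, (Ideal.Quotient.mk m).comp includeLeftRingHom,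
    (Ideal.Quotient.mk m).comp (includeRight : Q →ₐ[R] P ⊗[R] Q).toRingHom,
    fun x => congrArg (Ideal.Quotient.mk m) (tmul_one_eq_one_tmul x)⟩

theorem exists_germ_amalgam.{u} {M B : Type*} {L K : Type u} [Field M] [IsAlgClosed M] [CommRing B]
    [Field L] [Field K] [Algebra M B] [Algebra M L] [Algebra M K] [Algebra L K]
    [IsScalarTower M L K] {κ : Type*} (b : Module.Basis κ M B) {f : B →ₐ[M] K}
    (hf : LinearIndependent L (f ∘ b)) :
    ∃ (U : Ultrafilter (Finset L)) (θ : L →ₐ[M] Germ (U : Filter (Finset L)) M) (Ω : Type u)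
      (_ : Field Ω) (i : K →+* Ω) (j : Germ (U : Filter (Finset L)) K →+* Ω),
      (∀ x, i (f x) = j ↑(f x)) ∧ ∀ y, i (algebraMap L K y) = j (algebraMap _ _ (θ y)) := by
  obtain ⟨U, ⟨θ⟩⟩ := exists_algHom_ultrapower M L
  let g : B →ₐ[M] Germ (U : Filter (Finset L)) K := (germConst M (U : Filter (Finset L))).comp f
  have hg : LinearIndependent (Germ (U : Filter (Finset L)) M) (g ∘ b) :=
    linearIndependent_germ_const (hf.restrict_scalars' M) (U : Filter (Finset L))
  let F : L ⊗[M] B →ₐ[L] K := productLeftAlgHom (Algebra.ofId L K) f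
  let G := (productLeftAlgHom (Algebra.ofId (Germ (U : Filter (Finset L)) M) _) g).toRingHom.comp
    (Algebra.TensorProduct.map θ (AlgHom.id M B)).toRingHom
  have hG : Function.Injective G :=
    (productLeftAlgHom_injective_of_linearIndependent b hg).comp
      (Module.Flat.rTensor_preserves_injective_linearMap θ.toLinearMap θ.injective)
  obtain ⟨Ω, _, i, j, hij⟩ := exists_field_amalgam (f := F.toRingHom)
    (productLeftAlgHom_injective_of_linearIndependent b hf) hG
  refine ⟨U, θ, Ω, _, i, j, fun x => ?_, fun y => ?_⟩
  · simpa [F, G, g, germConst_apply] using hij (1 ⊗ₜ x)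
  · simpa [F, G, g] using hij (y ⊗ₜ 1)

end Amalgam

section AlgebraicClosure

variable {K Ω : Type*} [Field K] [Field Ω]

theorem algCl_eq_toSubfield_algebraicClosure (E : Subfield K) :
    algCl E = (algebraicClosure E K).toSubfield :=
  le_antisymm
    (Subfield.closure_le.2 fun _ hx => mem_algebraicClosure_iff'.2 hx.isIntegral)
    fun _ hx => Subfield.subset_closure (mem_algebraicClosure_iff'.1 hx).isAlgebraic

theorem le_algCl (E : Subfield K) : E ≤ algCl E := fun x hx =>
  Subfield.subset_closure (isAlgebraic_algebraMap (⟨x, hx⟩ : E))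

instance isAlgClosed_algCl [IsAlgClosed K] (E : Subfield K) : IsAlgClosed (algCl E) := by
  rw [algCl_eq_toSubfield_algebraicClosure]
  exact (algebraicClosure.isAlgClosure E K).isAlgClosed

theorem algCl_le_comap {E : Subfield K} {F : Subfield Ω} [IsAlgClosed F] {i : K →+* Ω}
    (h : E ≤ F.comap i) : algCl E ≤ F.comap i := by
  refine Subfield.closure_le.2 fun x hx => ?_
  have hint : IsIntegral F (i x) :=
    hx.isIntegral.map_of_comp_eq ((i.comp E.subtype).codRestrict F fun y => h y.2) i rfl
  have hbot := IntermediateField.eq_bot_of_isAlgClosed_of_isAlgebraic (algebraicClosure F Ω)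
  obtain ⟨y, hy⟩ := IntermediateField.mem_bot.1 (hbot ▸ mem_algebraicClosure_iff'.2 hint)
  change i x ∈ F
  rw [← hy]
  exact y.2

theorem algCl_le {E F : Subfield K} [IsAlgClosed F] (h : E ≤ F) : algCl E ≤ F :=
  algCl_le_comap (i := RingHom.id K) h

theorem algCl_mono [IsAlgClosed K] {E F : Subfield K} (h : E ≤ F) : algCl E ≤ algCl F :=
  algCl_le (h.trans (le_algCl F))

end AlgebraicClosure

section LinearDisjoint

variable {K : Type*} [Field K]

theorem span_eq_toSubmodule_extendScalars {C E : Subfield K} (h : C ≤ E) :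
    Submodule.span C (E : Set K) = Subalgebra.toSubmodule (Subfield.extendScalars h).toSubalgebra :=
  Submodule.span_eq (Subalgebra.toSubmodule (Subfield.extendScalars h).toSubalgebra)

theorem linearDisjointOver_iff_linearIndependent {C E F : Subfield K} (hCE : C ≤ E) (hCF : C ≤ F)
    {κ : Type*} (b : Module.Basis κ C (Subfield.extendScalars hCE)) :
    LinearDisjointOver C E F ↔ LinearIndependent F fun k => (b k : K) := by
  have hiff : LinearDisjointOver C E F ↔
      (Subfield.extendScalars hCE).LinearDisjoint (Subfield.extendScalars hCF) := by
    rw [LinearDisjointOver, span_eq_toSubmodule_extendScalars hCE,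
      span_eq_toSubmodule_extendScalars hCF, ← Subalgebra.linearDisjoint_iff,
      IntermediateField.linearDisjoint_iff']
  rw [hiff]
  exact ⟨fun h => h.linearIndependent_left (L := Subfield.extendScalars hCF) b.linearIndependent,
    fun h => .of_basis_left (L := Subfield.extendScalars hCF) b h⟩

theorem LinearDisjointOver.mono {C E E' F F' : Subfield K} (h : LinearDisjointOver C E F)
    (hE : E' ≤ E) (hF : F' ≤ F) : LinearDisjointOver C E' F' :=
  Submodule.LinearDisjoint.of_le_of_flat_right h (Submodule.span_mono hE) (Submodule.span_mono hF)

theorem linearDisjointOver_self_right (C E : Subfield K) : LinearDisjointOver C E C :=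
  Submodule.LinearDisjoint.of_right_le_one_of_flat _ _ <| Submodule.span_le.2 fun x hx =>
    Submodule.mem_one.2 ⟨⟨x, hx⟩, rfl⟩

end LinearDisjoint

section Specialization

open Filter

universe u

variable {ι K Ω : Type u} [Field K] [Field Ω] {U : Ultrafilter ι}
  {i : K →+* Ω} {j : Germ (U : Filter ι) K →+* Ω} {C D E F : Subfield K}

/-- Let `i : K → Ω` and `j : K^ι / U → Ω` be embeddings into a common field. Identifying `x` with a
generic family `(x_t)` whenever `i x = j [x_t]`, this is the field of the `x ∈ K` that specialize
to a family of elements of `C`. -/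
def specializationField (i : K →+* Ω) (j : Germ (U : Filter ι) K →+* Ω) (C : Subfield K) :
    Subfield K :=
  (j.comp (algebraMap (Germ (U : Filter ι) C) (Germ (U : Filter ι) K))).fieldRange.comap i

theorem specializationField_mono (h : C ≤ D) :
    specializationField i j C ≤ specializationField i j D := by
  rintro x ⟨y, hy⟩
  refine ⟨y.map (Subfield.inclusion h), ?_⟩
  rw [← hy]
  induction y using Germ.inductionOn with | _ f => rfl

theorem le_specializationField (h : ∀ x ∈ C, i x = j ↑x) : C ≤ specializationField i j C :=
  fun x hx => ⟨((⟨x, hx⟩ : C) : Germ (U : Filter ι) C), (h x hx).symm⟩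

theorem algCl_le_specializationField [IsAlgClosed C] (h : E ≤ specializationField i j C) :
    algCl E ≤ specializationField i j C :=
  have : IsAlgClosed
      (j.comp (algebraMap (Germ (U : Filter ι) C) (Germ (U : Filter ι) K))).fieldRange :=
    .of_ringEquiv _ _ (.ofBijective _ (RingHom.rangeRestrictField_bijective _))
  algCl_le_comap h

theorem linearIndependent_of_le_specializationField {κ : Type*} {v : κ → K}
    (hv : LinearIndependent D v) (hconst : ∀ k, i (v k) = j ↑(v k))
    (hF : F ≤ specializationField i j D) : LinearIndependent F v := by
  rw [linearIndependent_iff']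
  intro s c hc k hk
  choose g hg using fun k => hF (c k).2
  have hsum : ∑ k ∈ s, g k • (↑(v k) : Germ (U : Filter ι) K) = 0 := by
    refine (map_eq_zero j).1 ?_
    calc j (∑ k ∈ s, g k • (↑(v k) : Germ (U : Filter ι) K))
        = ∑ k ∈ s, j (algebraMap _ _ (g k)) * j ↑(v k) := by
          rw [map_sum]
          refine Finset.sum_congr rfl fun k _ => ?_
          rw [Algebra.smul_def, map_mul]
      _ = i (∑ k ∈ s, c k • v k) := by
          rw [map_sum]
          refine Finset.sum_congr rfl fun k _ => ?_
          rw [Subfield.smul_def, smul_eq_mul, map_mul, hconst, ← hg]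
          rfl
      _ = 0 := by rw [hc, map_zero]
  have hgk : g k = 0 :=
    linearIndependent_iff'.1 (linearIndependent_germ_const hv (U : Filter ι)) s g hsum k hk
  refine Subtype.ext ((map_eq_zero i).1 ?_)
  rw [← hg, hgk, map_zero]

theorem exists_specialization {M B L : Subfield K} [IsAlgClosed M] (hMB : M ≤ B) (hML : M ≤ L)
    (h : LinearDisjointOver M B L) :
    ∃ (ι : Type u) (U : Ultrafilter ι) (Ω : Type u) (_ : Field Ω) (i : K →+* Ω)
      (j : Germ (U : Filter ι) K →+* Ω),
      (∀ x ∈ B, i x = j ↑x) ∧ L ≤ specializationField i j M := by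
  let b := Module.Basis.ofVectorSpace M (Subfield.extendScalars hMB)
  obtain ⟨U, θ, Ω, _, i, j, hB, hL⟩ := exists_germ_amalgam (L := Subfield.extendScalars hML)
    (f := (Subfield.extendScalars hMB).val) b
    ((linearDisjointOver_iff_linearIndependent hMB hML b).1 h)
  exact ⟨_, U, Ω, _, i, j, fun x hx => hB ⟨x, hx⟩, fun y hy => ⟨θ ⟨y, hy⟩, (hL ⟨y, hy⟩).symm⟩⟩

end Specialization

section Subsystem

variable {K : Type*} [Field K] [IsAlgClosed K]

theorem LinearDisjointOver.iSup_algCl_sup {M B L C E : Subfield K} [IsAlgClosed M] {κ : Type*}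
    {s : Set κ} {D : κ → Subfield K} (hMB : M ≤ B) (hML : M ≤ L) (hBL : LinearDisjointOver M B L)
    (hMD : ∀ k ∈ s, M ≤ algCl (D k)) (hDB : ∀ k ∈ s, D k ≤ B) (hCE : C ≤ E) (hEB : E ≤ B)
    (hCD : C ≤ ⨆ k ∈ s, algCl (D k)) (h : LinearDisjointOver C E (⨆ k ∈ s, algCl (D k))) :
    LinearDisjointOver C E (⨆ k ∈ s, algCl (D k ⊔ L)) := by
  obtain ⟨ι, U, Ω, _, i, j, hB, hL⟩ := exists_specialization hMB hML hBL
  have hspec (k : κ) (hk : k ∈ s) : D k ⊔ L ≤ specializationField i j (algCl (D k)) :=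
    sup_le
      ((le_specializationField fun x hx => hB x (hDB k hk hx)).trans
        (specializationField_mono (le_algCl _)))
      (hL.trans (specializationField_mono (hMD k hk)))
  have hle : ⨆ k ∈ s, algCl (D k ⊔ L) ≤ specializationField i j (⨆ k ∈ s, algCl (D k)) :=
    iSup₂_le fun k hk => (algCl_le_specializationField (hspec k hk)).trans
      (specializationField_mono (le_iSup₂ (f := fun k _ => algCl (D k)) k hk))
  have hCF : C ≤ ⨆ k ∈ s, algCl (D k ⊔ L) :=
    hCD.trans (iSup₂_mono fun k _ => algCl_mono le_sup_left)
  let b := Module.Basis.ofVectorSpace C (Subfield.extendScalars hCE)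
  have hb := (linearDisjointOver_iff_linearIndependent hCE hCD b).1 h
  exact (linearDisjointOver_iff_linearIndependent hCE hCF b).2
    (linearIndependent_of_le_specializationField hb (fun k => hB _ (hEB (b k).2)) hle)

variable {V : Type*} [DecidableEq V]

theorem algCl_le_algCl_inter_sup {S : Finset V → Subfield K} (hmono : Monotone S)
    (u : Finset V) {v : Finset V} (halg : S v ≤ algCl (S ∅ ⊔ ⨆ i ∈ v, S {i})) :
    algCl (S v) ≤ algCl (S (v ∩ u) ⊔ algCl (S ∅ ⊔ ⨆ i ∉ u, S {i})) := by
  refine algCl_le (halg.trans (algCl_mono (sup_le ?_ (iSup₂_le fun i hiv => ?_))))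
  · exact le_sup_of_le_left (hmono (Finset.empty_subset _))
  by_cases hiu : i ∈ u
  · exact le_sup_of_le_left
      (hmono (Finset.singleton_subset_iff.2 (Finset.mem_inter.2 ⟨hiv, hiu⟩)))
  · exact le_sup_of_le_right <|
      (le_iSup₂ (f := fun i (_ : i ∉ u) => S {i}) i hiu).trans (le_sup_right.trans (le_algCl _))

theorem regular_first_linear_disjointness_general {S : Finset V → Subfield K} (hmono : Monotone S)
    (halg : ∀ v, S v ≤ algCl (S ∅ ⊔ ⨆ i ∈ v, S {i})) (u : Finset V)
    (hind : LinearDisjointOver (algCl (S ∅)) (algCl (S u)) (algCl (S ∅ ⊔ ⨆ i ∉ u, S {i})))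
    (hreg : LinearDisjointOver (⨆ v ∈ u.powerset.erase u, S v) (S u)
      (⨆ v ∈ u.powerset.erase u, algCl (S v))) :
    LinearDisjointOver (⨆ v ∈ u.powerset.erase u, S v) (S u)
      (⨆ v ∈ {v : Finset V | (v ∩ u).card < u.card}, algCl (S v)) := by
  have hsub {v : Finset V} (hv : v ∈ u.powerset.erase u) : v ⊆ u :=
    Finset.mem_powerset.1 (Finset.mem_of_mem_erase hv)
  have hempty (v : Finset V) : algCl (S ∅) ≤ algCl (S v) :=
    algCl_mono (hmono (Finset.empty_subset v))
  have hjoin : LinearDisjointOver (⨆ v ∈ u.powerset.erase u, S v) (S u)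
      (⨆ v ∈ u.powerset.erase u, algCl (S v ⊔ algCl (S ∅ ⊔ ⨆ i ∉ u, S {i}))) :=
    hind.iSup_algCl_sup (s := {v | v ∈ u.powerset.erase u}) (hempty u) (algCl_mono le_sup_left)
      (fun v _ => hempty v) (fun v hv => (hmono (hsub hv)).trans (le_algCl _))
      (iSup₂_le fun v hv => hmono (hsub hv)) (le_algCl _) (iSup₂_mono fun v _ => le_algCl _) hreg
  refine hjoin.mono le_rfl (iSup₂_le fun v hv => ?_)
  have hvu : v ∩ u ∈ u.powerset.erase u :=
    Finset.mem_erase.2 ⟨fun h => hv.ne (congrArg Finset.card h),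
      Finset.mem_powerset.2 Finset.inter_subset_right⟩
  exact (algCl_le_algCl_inter_sup hmono u (halg v)).trans
    (le_iSup₂ (f := fun w (_ : w ∈ u.powerset.erase u) =>
      algCl (S w ⊔ algCl (S ∅ ⊔ ⨆ i ∉ u, S {i}))) (v ∩ u) hvu)

end Subsystem

theorem IsFiniteGaloisExt.le_algCl {K : Type*} [Field K] {E F : Subfield K}
    (h : IsFiniteGaloisExt F E) : E ≤ algCl F := by
  obtain ⟨hle, _, -⟩ := h
  intro x hx
  let : Algebra F E := (Subfield.inclusion hle).toAlgebra
  have : IsScalarTower F E K := .of_algebraMap_eq' rfl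
  have hx' : IsAlgebraic F (⟨x, hx⟩ : E) := .of_finite F _
  exact Subfield.subset_closure (hx'.algebraMap (A := K))

section InversiveClosure

variable {K : Type*} [Field K] {σ : K ≃+* K} {A : Subfield K}

theorem le_invCl : A ≤ invCl σ A :=
  le_sInf fun _ hF => hF.1

theorem invCl_eq_self (hA : A.map (σ : K →+* K) = A) : invCl σ A = A := by
  refine le_antisymm (sInf_le ⟨le_rfl, fun x hx => ?_, fun x hx => ?_⟩) le_invCl
  · exact hA.le ⟨x, hx, rfl⟩
  · obtain ⟨y, hy, rfl⟩ := hA.ge hx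
    simpa using hy

end InversiveClosure

namespace DiffFieldSystem

variable {K : Type*} [Field K] {σ : K ≃+* K} {V : Type*} [Fintype V] [DecidableEq V]
  {A : Subfield K}

theorem le_algCl_points [IsAlgClosed K] (𝒮 : DiffFieldSystem σ V A) (v : Finset V) :
    𝒮.S v ≤ algCl (𝒮.S ∅ ⊔ ⨆ i ∈ v, 𝒮.S {i}) := by
  induction v using Finset.strongInduction with
  | H v ih =>
    obtain rfl | ⟨i, rfl⟩ | hv : v = ∅ ∨ (∃ i, v = {i}) ∨ 2 ≤ v.card := by
      rw [← Finset.card_eq_zero, ← Finset.card_eq_one]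
      omega
    · exact le_sup_left.trans (le_algCl _)
    · refine le_trans ?_ (le_algCl _)
      simp
    · refine (𝒮.galois v hv).le_algCl.trans (algCl_le (iSup₂_le fun w hw => ?_))
      have hwv : w ⊂ v := Finset.mem_ssubsets.1 hw
      exact (ih w hwv).trans (algCl_mono (sup_le_sup_left (biSup_mono fun i hi => hwv.1 hi) _))

theorem linearDisjointOver_algCl_compl [IsAlgClosed K] (𝒮 : DiffFieldSystem σ V A)
    (hA : A.map (σ : K →+* K) = A) (u : Finset V) :
    LinearDisjointOver (algCl (𝒮.S ∅)) (algCl (𝒮.S u))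
      (algCl (𝒮.S ∅ ⊔ ⨆ i ∉ u, 𝒮.S {i})) := by
  have hind : IndependentOver σ A _ _ := 𝒮.indep u uᶜ disjoint_compl_right
  simp only [IndependentOver, invCl_eq_self hA, Finset.mem_compl] at hind
  rw [𝒮.empty_eq]
  refine hind.mono (algCl_le ((𝒮.le_algCl_points u).trans (algCl_mono ?_))) (algCl_mono ?_)
  · rw [𝒮.empty_eq]
    exact le_sup_left.trans le_invCl
  · exact le_sup_left.trans le_invCl

theorem Regular.linearDisjointOver {𝒮 : DiffFieldSystem σ V A} (hreg : 𝒮.Regular) (u : Finset V) :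
    LinearDisjointOver (𝒮.Sminus u) (𝒮.S u) (⨆ v ∈ u.powerset.erase u, algCl (𝒮.S v)) := by
  obtain rfl | hu := eq_or_ne u ∅
  · simpa [Sminus] using linearDisjointOver_self_right ⊥ (𝒮.S ∅)
  · exact hreg u hu

end DiffFieldSystem

/-- (First linear disjointness lemma for regular systems.) If `𝒮`
is a regular system of difference fields on `V` over `A`, then for every
`u ⊆ V`, `S(u)` is linearly disjoint from `∏_{v ∈ P(V,u,|u|-1)} S(v)^{alg}`
over `∏_{v ∈ P(u)⁻} S(v)`, where `P(V,u,|u|-1) = {v ⊆ V : |v ∩ u| ≤ |u|-1}`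
(equivalently `|v ∩ u| < |u|`). -/
theorem regular_first_linear_disjointness
    {K : Type*} [Field K] [IsAlgClosed K] (σ : K ≃+* K)
    {V : Type*} [Fintype V] [DecidableEq V]
    (A : Subfield K) (hAperf : PerfectField A) (hAinv : A.map (σ : K →+* K) = A)
    (𝒮 : DiffFieldSystem σ V A) (hreg : 𝒮.Regular)
    (u : Finset V) :
    LinearDisjointOver
      (𝒮.Sminus u)
      (𝒮.S u)
      (⨆ v ∈ {v : Finset V | (v ∩ u).card < u.card}, algCl (𝒮.S v)) :=
  regular_first_linear_disjointness_general (fun _ _ => 𝒮.mono) 𝒮.le_algCl_points u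
    (𝒮.linearDisjointOver_algCl_compl hAinv u) (hreg.linearDisjointOver u)
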